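/- arXiv:2512.16088 — 3 statements merged into one kernel-verified Lean document; each statement's English description precedes it below -/
import Mathlib

section
/- For every τ in the upper half-plane H and every t ∈ ℂ, the theta functions θ₁ and θ₂ satisfy the modular S-transformation law θ₁(t/τ, −1/τ) = √(τ/i) · e^{πit²/τ} · θ₂(t,τ), where √(τ/i) denotes the principal branch of the square root (well defined since Re(τ/i) > 0 for τ ∈ H). -/
/-!
The proof compares infinite products with theta series. The Jacobi triple product identity
`∏_{j ≥ 0} (1 - h^{2j+2}) (1 + x h^{2j+1}) (1 + x⁻¹ h^{2j+1}) = ∑_{k ∈ ℤ} h^{k²} x^k`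
(`jacobi_triple_product`) with `h = e^{πiτ}`, `x = e^{2πiv}` turns `θ₃` into Mathlib's
`jacobiTheta₂`, whose transformation under `τ ↦ -1/τ` is known (a consequence of Poisson
summation). Since `θ₂(v, τ) = θ₃(v - 1/2, τ)` and
`θ₁(v, τ) = q^{1/8} e^{πiv} θ₃(v + τ/2, τ)`, the claim is that functional equation at `z = t - 1/2`:
`(t - 1/2)/τ = t/τ + (-1/τ)/2`, and the exponential prefactors agree.

The triple product is the limit of its finite form: the `n`-th partial product equals
`∑_k a(n,k) h^{k²} x^k` with `a(n,k) = (q)_n (q)_{2n} / ((q)_{n+k} (q)_{n-k})`, where `q = h²` and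
`(q)_m = ∏_{j=1}^m (1 - q^j)`. As `(q)_m` has a nonzero limit, the `a(n,k)` are uniformly bounded
and tend to `1` for fixed `k`, so dominated convergence applies.
-/

noncomputable section

/-- `qpow τ x = e^{2πiτx}`, so that `qpow τ j = q^j` with `q = e^{2πiτ}`. -/
def qpow (τ x : ℂ) : ℂ := Complex.exp (2 * (Real.pi : ℂ) * Complex.I * τ * x)

/-- Jacobi theta function
`θ(v,τ) = 2 q^{1/8} sin(πv) ∏_{j=1}^∞ (1−q^j)(1−e^{2πiv}q^j)(1−e^{−2πiv}q^j)`. -/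
def jTheta (v τ : ℂ) : ℂ :=
  2 * qpow τ (1/8) * Complex.sin ((Real.pi : ℂ) * v) *
    ∏' j : ℕ, ((1 - qpow τ ((j : ℂ) + 1)) *
      (1 - Complex.exp (2 * (Real.pi : ℂ) * Complex.I * v) * qpow τ ((j : ℂ) + 1)) *
      (1 - Complex.exp (-(2 * (Real.pi : ℂ) * Complex.I * v)) * qpow τ ((j : ℂ) + 1)))

/-- Jacobi theta function
`θ₁(v,τ) = 2 q^{1/8} cos(πv) ∏_{j=1}^∞ (1−q^j)(1+e^{2πiv}q^j)(1+e^{−2πiv}q^j)`. -/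
def jTheta1 (v τ : ℂ) : ℂ :=
  2 * qpow τ (1/8) * Complex.cos ((Real.pi : ℂ) * v) *
    ∏' j : ℕ, ((1 - qpow τ ((j : ℂ) + 1)) *
      (1 + Complex.exp (2 * (Real.pi : ℂ) * Complex.I * v) * qpow τ ((j : ℂ) + 1)) *
      (1 + Complex.exp (-(2 * (Real.pi : ℂ) * Complex.I * v)) * qpow τ ((j : ℂ) + 1)))

/-- Jacobi theta function
`θ₂(v,τ) = ∏_{j=1}^∞ (1−q^j)(1−e^{2πiv}q^{j−1/2})(1−e^{−2πiv}q^{j−1/2})`. -/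
def jTheta2 (v τ : ℂ) : ℂ :=
  ∏' j : ℕ, ((1 - qpow τ ((j : ℂ) + 1)) *
    (1 - Complex.exp (2 * (Real.pi : ℂ) * Complex.I * v) * qpow τ ((j : ℂ) + 1/2)) *
    (1 - Complex.exp (-(2 * (Real.pi : ℂ) * Complex.I * v)) * qpow τ ((j : ℂ) + 1/2)))

/-- Jacobi theta function
`θ₃(v,τ) = ∏_{j=1}^∞ (1−q^j)(1+e^{2πiv}q^{j−1/2})(1+e^{−2πiv}q^{j−1/2})`. -/
def jTheta3 (v τ : ℂ) : ℂ :=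
  ∏' j : ℕ, ((1 - qpow τ ((j : ℂ) + 1)) *
    (1 + Complex.exp (2 * (Real.pi : ℂ) * Complex.I * v) * qpow τ ((j : ℂ) + 1/2)) *
    (1 + Complex.exp (-(2 * (Real.pi : ℂ) * Complex.I * v)) * qpow τ ((j : ℂ) + 1/2)))

/-- `θ'(0,τ) = ∂θ(v,τ)/∂v |_{v=0}`. -/
def jThetaDeriv (τ : ℂ) : ℂ := deriv (fun v => jTheta v τ) 0

end

open Filter Topology

/-! ### Pochhammer symbols and the coefficients of the finite triple product -/

noncomputable section

/-- The `q`-Pochhammer symbol `(q)_n = ∏_{j=1}^n (1 - q^j)` in terms of the nome `h`, `q = h²`. -/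
def poch (h : ℂ) (n : ℕ) : ℂ := ∏ j ∈ Finset.range n, (1 - h ^ (2 * j + 2))

/-- The reciprocal `1 / (q)_m`, extended by `0` to negative `m`; this is the extension for which
the recursion `pochInv_rec` holds on all of `ℤ`. -/
def pochInv (h : ℂ) : ℤ → ℂ
  | Int.ofNat n => (poch h n)⁻¹
  | Int.negSucc _ => 0

/-- The coefficient `a(n,k)` of `h^{k²} x^k` in the finite triple product; it vanishes for
`|k| > n`. -/
def tripleCoeff (h : ℂ) (n : ℕ) (k : ℤ) : ℂ :=
  poch h n * poch h (2 * n) * pochInv h (n + k) * pochInv h (n - k)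

end

lemma one_sub_pow_ne_zero_of_norm_lt {h : ℂ} (h1 : ‖h‖ < 1) (j : ℕ) : 1 - h ^ (2 * j + 2) ≠ 0 := by
  intro H
  have h2 : ‖h ^ (2 * j + 2)‖ < 1 := by
    rw [norm_pow]; exact pow_lt_one₀ (norm_nonneg _) h1 (by omega)
  rw [← sub_eq_zero.mp H] at h2
  simp at h2

lemma poch_succ (h : ℂ) (n : ℕ) : poch h (n + 1) = poch h n * (1 - h ^ (2 * n + 2)) :=
  Finset.prod_range_succ _ _

lemma poch_ne_zero {h : ℂ} (h1 : ‖h‖ < 1) (n : ℕ) : poch h n ≠ 0 :=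
  Finset.prod_ne_zero_iff.mpr fun j _ => one_sub_pow_ne_zero_of_norm_lt h1 j

lemma pochInv_rec {h : ℂ} (h1 : ‖h‖ < 1) (m : ℤ) :
    pochInv h m = pochInv h (m + 1) * (1 - h ^ (2 * m + 2)) := by
  rcases m with n | n
  · have e : (Int.ofNat n + 1) = Int.ofNat (n + 1) := rfl
    have e2 : h ^ (2 * (Int.ofNat n) + 2) = h ^ (2 * n + 2) := by
      rw [← zpow_natCast]; congr 1
    rw [e, e2]
    simp only [pochInv, poch_succ]
    have := one_sub_pow_ne_zero_of_norm_lt h1 n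
    have := poch_ne_zero h1 n
    field_simp
  · rcases n with _ | n
    · simp [pochInv]
    · have e : (Int.negSucc (n + 1) + 1) = Int.negSucc n := rfl
      rw [e]; simp [pochInv]

lemma summable_norm_pow_mul_add {h : ℂ} (h1 : ‖h‖ < 1) (y : ℂ) (c : ℕ) :
    Summable fun j : ℕ => ‖y * h ^ (2 * j + c)‖ := by
  have h2 : ‖h‖ ^ 2 < 1 := pow_lt_one₀ (norm_nonneg _) h1 two_ne_zero
  refine ((summable_geometric_of_lt_one (by positivity) h2).mul_left (‖y‖ * ‖h‖ ^ c)).congr ?_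
  intro j
  rw [norm_mul, norm_pow, pow_add, pow_mul]; ring

lemma multipliable_one_add_mul_pow {h : ℂ} (h1 : ‖h‖ < 1) (y : ℂ) (c : ℕ) :
    Multipliable fun j : ℕ => (1 + y * h ^ (2 * j + c)) :=
  multipliable_one_add_of_summable (summable_norm_pow_mul_add h1 y c)

lemma multipliable_one_sub_pow {h : ℂ} (h1 : ‖h‖ < 1) :
    Multipliable fun j : ℕ => (1 - h ^ (2 * j + 2)) := by
  simpa [sub_eq_add_neg] using multipliable_one_add_mul_pow h1 (-1) 2

lemma poch_tendsto {h : ℂ} (h1 : ‖h‖ < 1) :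
    ∃ L : ℂ, L ≠ 0 ∧ Tendsto (poch h) atTop (𝓝 L) := by
  refine ⟨∏' j : ℕ, (1 - h ^ (2 * j + 2)), ?_, (multipliable_one_sub_pow h1).tendsto_prod_tprod_nat⟩
  have := tprod_one_add_ne_zero_of_summable (f := fun j : ℕ => -1 * h ^ (2 * j + 2))
    (fun j => by simpa [sub_eq_add_neg] using one_sub_pow_ne_zero_of_norm_lt h1 j)
    (summable_norm_pow_mul_add h1 (-1) 2)
  simpa [sub_eq_add_neg] using this

/-- Both `(q)_m` and its reciprocal are convergent sequences, hence bounded. -/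
lemma tripleCoeff_bounded {h : ℂ} (h1 : ‖h‖ < 1) :
    ∃ C : ℝ, ∀ n k, ‖tripleCoeff h n k‖ ≤ C := by
  obtain ⟨L, hL, hT⟩ := poch_tendsto h1
  obtain ⟨A, hA⟩ := (Metric.isBounded_range_of_tendsto _ hT).exists_norm_le
  obtain ⟨B, hB⟩ := (Metric.isBounded_range_of_tendsto _ (hT.inv₀ hL)).exists_norm_le
  have hA' : ∀ n, ‖poch h n‖ ≤ A := fun n => hA _ ⟨n, rfl⟩
  have hB0 : 0 ≤ B := (norm_nonneg _).trans (hB _ ⟨0, rfl⟩)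
  have hA0 : 0 ≤ A := (norm_nonneg _).trans (hA' 0)
  have hB' : ∀ m, ‖pochInv h m‖ ≤ B := by
    rintro (n | n)
    · exact hB _ ⟨n, rfl⟩
    · simpa [pochInv] using hB0
  refine ⟨A * A * B * B, fun n k => ?_⟩
  simp only [tripleCoeff, norm_mul]
  gcongr <;> first | exact hA' _ | exact hB' _

lemma pochInv_tendsto {h L : ℂ} (hL : L ≠ 0) (hT : Tendsto (poch h) atTop (𝓝 L)) (k : ℤ) :
    Tendsto (fun n : ℕ => pochInv h (n + k)) atTop (𝓝 L⁻¹) := by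
  have h2 : Tendsto (fun n : ℕ => ((n : ℤ) + k).toNat) atTop atTop := by
    refine tendsto_atTop.mpr fun b => ?_
    filter_upwards [eventually_ge_atTop (b + k.natAbs)] with n hn
    omega
  refine ((hT.inv₀ hL).comp h2).congr' ?_
  filter_upwards [eventually_ge_atTop k.natAbs] with n hn
  obtain ⟨m, hm⟩ := Int.eq_ofNat_of_zero_le (show 0 ≤ (n : ℤ) + k by omega)
  rw [Function.comp, hm]
  rfl

lemma tripleCoeff_tendsto {h : ℂ} (h1 : ‖h‖ < 1) (k : ℤ) :
    Tendsto (fun n => tripleCoeff h n k) atTop (𝓝 1) := by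
  obtain ⟨L, hL, hT⟩ := poch_tendsto h1
  have h2 : Tendsto (fun n : ℕ => poch h (2 * n)) atTop (𝓝 L) :=
    hT.comp (tendsto_id.const_mul_atTop' two_pos)
  have := ((hT.mul h2).mul (pochInv_tendsto hL hT k)).mul (pochInv_tendsto hL hT (-k))
  have e : L * L * L⁻¹ * L⁻¹ = 1 := by field_simp
  rw [e] at this
  exact this

/-! ### The Jacobi triple product -/

/-- Multiplying the `n`-th partial triple product by its next factor acts on the coefficients by
this three-term recursion. -/
lemma tripleCoeff_succ {h : ℂ} (h0 : h ≠ 0) (h1 : ‖h‖ < 1) (n : ℕ) (k : ℤ) :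
    tripleCoeff h (n + 1) k = (1 - h ^ (2 * n + 2)) *
      ((1 + h ^ (4 * n + 2)) * tripleCoeff h n k
        + h ^ (2 * n + 2) * (h ^ (2 * k))⁻¹ * tripleCoeff h n (k - 1)
        + h ^ (2 * n + 2) * h ^ (2 * k) * tripleCoeff h n (k + 1)) := by
  have key : ∀ m : ℤ, h ^ (2 * (n + m) + 2) = h ^ (2 * n + 2) * h ^ (2 * m) := fun m => by
    rw [← zpow_natCast, ← zpow_add₀ h0]; congr 1; push_cast; ring
  have r1 : ∀ m : ℤ, pochInv h (n + m)
      = pochInv h (n + 1 + m) * (1 - h ^ (2 * n + 2) * h ^ (2 * m)) := fun m => by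
    rw [pochInv_rec h1, key, add_right_comm]
  have r2 : ∀ m : ℤ, pochInv h (n + (m - 1)) = pochInv h (n + 1 + m)
      * (1 - h ^ (2 * n + 2) * h ^ (2 * m)) * (1 - h ^ (2 * n) * h ^ (2 * m)) := fun m => by
    have e : h ^ (2 * (m - 1)) = h ^ (2 * m) * (h ^ 2)⁻¹ := by
      rw [mul_sub, zpow_sub₀ h0]; rfl
    have e2 : h ^ (2 * n + 2) = h ^ (2 * n) * h ^ 2 := pow_add _ _ _
    rw [r1, show (n : ℤ) + 1 + (m - 1) = n + m by ring, r1, e, e2]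
    field_simp
  simp only [tripleCoeff, Nat.cast_add, Nat.cast_one, poch_succ,
    show 2 * (n + 1) = (2 * n + 1) + 1 by ring]
  rw [r1 k, r2 k, show (n : ℤ) - k = n + (-k) by ring, r1 (-k),
    show (n : ℤ) - (k + 1) = n + (-k - 1) by ring, r2 (-k),
    show (n : ℤ) - (k - 1) = n + 1 + -k by ring, show (n : ℤ) + (k + 1) = n + 1 + k by ring,
    show (n : ℤ) + 1 - k = n + 1 + -k by ring, show 2 * -k = -(2 * k) by ring, zpow_neg]
  have hY : h ^ (2 * k) ≠ 0 := zpow_ne_zero _ h0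
  generalize h ^ (2 * k) = Y at *
  generalize pochInv h (n + 1 + k) = R
  generalize pochInv h (n + 1 + -k) = S
  have e1 : h ^ (2 * n + 2) = h ^ (2 * n) * h ^ 2 := pow_add _ _ _
  have e2 : h ^ (4 * n + 2) = (h ^ (2 * n)) ^ 2 * h ^ 2 := by ring
  have e3 : h ^ (2 * (2 * n) + 2) = (h ^ (2 * n)) ^ 2 * h ^ 2 := by ring
  have e4 : h ^ (2 * (2 * n + 1) + 2) = (h ^ (2 * n)) ^ 2 * h ^ 4 := by ring
  rw [e1, e2, e3, e4]
  generalize h ^ (2 * n) = u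
  field_simp
  ring

/-- The finite form of the Jacobi triple product identity. -/
lemma finite_triple_product {h x : ℂ} (h0 : h ≠ 0) (h1 : ‖h‖ < 1) (hx : x ≠ 0) (n : ℕ) :
    HasSum (fun k : ℤ => tripleCoeff h n k * (h ^ (k ^ 2) * x ^ k))
      (∏ j ∈ Finset.range n,
        ((1 - h ^ (2 * j + 2)) * (1 + x * h ^ (2 * j + 1)) * (1 + x⁻¹ * h ^ (2 * j + 1)))) := by
  induction n with
  | zero =>
    have : ∀ k : ℤ, k ≠ 0 → tripleCoeff h 0 k * (h ^ (k ^ 2) * x ^ k) = 0 := by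
      rintro (_ | k) hk
      · rename_i k
        rcases k with _ | k
        · exact absurd rfl hk
        · have e : ((0 : ℕ) : ℤ) - Int.ofNat (k + 1) = Int.negSucc k := by
            rw [Int.negSucc_eq, Int.ofNat_eq_natCast]; push_cast; ring
          simp only [tripleCoeff, e]
          simp [pochInv]
      · have e : ((0 : ℕ) : ℤ) + Int.negSucc k = Int.negSucc k := by simp
        simp only [tripleCoeff, e]
        simp [pochInv]
    have h2 := hasSum_single (f := fun k : ℤ => tripleCoeff h 0 k * (h ^ (k ^ 2) * x ^ k)) 0 this
    have e : pochInv h 0 = 1 := by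
      change (poch h 0)⁻¹ = 1
      simp [poch]
    simpa [tripleCoeff, e, poch] using h2
  | succ n ih =>
    rw [Finset.prod_range_succ]
    set P := ∏ j ∈ Finset.range n,
        ((1 - h ^ (2 * j + 2)) * (1 + x * h ^ (2 * j + 1)) * (1 + x⁻¹ * h ^ (2 * j + 1)))
    -- The factors `x h^{2n+1}` and `x⁻¹ h^{2n+1}` shift the summation index by one.
    have H1 := (Equiv.subRight (1 : ℤ)).hasSum_iff.mpr ih
    have H2 := (Equiv.addRight (1 : ℤ)).hasSum_iff.mpr ih
    have H := (((ih.mul_left (1 + h ^ (4 * n + 2))).add (H1.mul_left (h ^ (2 * n + 1) * x))).add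
      (H2.mul_left (h ^ (2 * n + 1) * x⁻¹))).mul_left (1 - h ^ (2 * n + 2))
    have hP : P * ((1 - h ^ (2 * n + 2)) * (1 + x * h ^ (2 * n + 1)) * (1 + x⁻¹ * h ^ (2 * n + 1)))
        = (1 - h ^ (2 * n + 2)) * ((1 + h ^ (4 * n + 2)) * P + h ^ (2 * n + 1) * x * P
          + h ^ (2 * n + 1) * x⁻¹ * P) := by
      field_simp
      ring
    rw [hP]
    refine Eq.mpr (congrArg (fun f : ℤ → ℂ => HasSum f _) (funext fun k => ?_)) H
    simp only [Function.comp, Equiv.subRight_apply, Equiv.coe_addRight]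
    rw [tripleCoeff_succ h0 h1]
    have t1 : h ^ ((k - 1) ^ 2) * x ^ (k - 1)
        = h ^ (k ^ 2) * x ^ k * (h * (h ^ (2 * k))⁻¹ * x⁻¹) := by
      rw [show (k - 1) ^ 2 = k ^ 2 - 2 * k + 1 by ring, zpow_add₀ h0, zpow_sub₀ h0,
        zpow_sub₀ hx]
      simp only [zpow_one]
      ring
    have t2 : h ^ ((k + 1) ^ 2) * x ^ (k + 1)
        = h ^ (k ^ 2) * x ^ k * (h * h ^ (2 * k) * x) := by
      rw [show (k + 1) ^ 2 = k ^ 2 + 2 * k + 1 by ring, zpow_add₀ h0, zpow_add₀ h0,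
        zpow_add₀ hx]
      simp only [zpow_one]
      ring
    rw [t1, t2]
    generalize h ^ (2 * k) = Y
    generalize h ^ (k ^ 2) * x ^ k = T
    field_simp
    ring

lemma jacobi_triple_product {h x : ℂ} (h0 : h ≠ 0) (h1 : ‖h‖ < 1) (hx : x ≠ 0)
    (hs : Summable fun k : ℤ => h ^ (k ^ 2) * x ^ k) :
    ∏' j : ℕ, ((1 - h ^ (2 * j + 2)) * (1 + x * h ^ (2 * j + 1)) * (1 + x⁻¹ * h ^ (2 * j + 1)))
      = ∑' k : ℤ, h ^ (k ^ 2) * x ^ k := by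
  have hm := ((multipliable_one_sub_pow h1).mul (multipliable_one_add_mul_pow h1 x 1)).mul
    (multipliable_one_add_mul_pow h1 x⁻¹ 1)
  obtain ⟨C, hC⟩ := tripleCoeff_bounded h1
  have h2 : Tendsto (fun n => ∑' k : ℤ, tripleCoeff h n k * (h ^ (k ^ 2) * x ^ k)) atTop
      (𝓝 (∑' k : ℤ, h ^ (k ^ 2) * x ^ k)) := by
    refine tendsto_tsum_of_dominated_convergence (hs.norm.mul_left C) (fun k => ?_)
      (Eventually.of_forall fun n k => ?_)
    · simpa using (tripleCoeff_tendsto h1 k).mul_const (h ^ (k ^ 2) * x ^ k)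
    · rw [norm_mul]
      exact mul_le_mul_of_nonneg_right (hC n k) (norm_nonneg _)
  refine tendsto_nhds_unique hm.tendsto_prod_tprod_nat (h2.congr fun n => ?_)
  exact (finite_triple_product h0 h1 hx n).tsum_eq

open Complex

/-! ### The theta functions as theta series -/

lemma norm_nome_lt_one {τ : ℂ} (hτ : 0 < τ.im) : ‖cexp (Real.pi * I * τ)‖ < 1 := by
  rw [norm_exp, Real.exp_lt_one_iff]
  have : (Real.pi * I * τ).re = -(Real.pi * τ.im) := by simp
  rw [this]
  have := mul_pos Real.pi_pos hτ
  linarith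

lemma qpow_eq_nome_pow (τ : ℂ) (y : ℂ) (m : ℕ) (hy : 2 * y = m) :
    qpow τ y = cexp (Real.pi * I * τ) ^ m := by
  rw [qpow, ← Complex.exp_nat_mul, ← hy]
  congr 1; ring

lemma qpow_add_one (τ : ℂ) (j : ℕ) : qpow τ (j + 1) = cexp (Real.pi * I * τ) ^ (2 * j + 2) :=
  qpow_eq_nome_pow _ _ _ (by push_cast; ring)

lemma qpow_add_half (τ : ℂ) (j : ℕ) :
    qpow τ (j + 1 / 2) = cexp (Real.pi * I * τ) ^ (2 * j + 1) :=
  qpow_eq_nome_pow _ _ _ (by push_cast; ring)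

lemma jTheta3_eq_jacobiTheta₂ (v : ℂ) {τ : ℂ} (hτ : 0 < τ.im) :
    jTheta3 v τ = jacobiTheta₂ v τ := by
  have hterm : ∀ k : ℤ, jacobiTheta₂_term k v τ
      = cexp (Real.pi * I * τ) ^ (k ^ 2) * cexp (2 * Real.pi * I * v) ^ k := fun k => by
    rw [jacobiTheta₂_term, ← Complex.exp_int_mul, ← Complex.exp_int_mul, ← Complex.exp_add]
    congr 1; push_cast; ring
  have hs := (summable_jacobiTheta₂_term_iff v τ).mpr hτ
  simp only [hterm] at hs
  rw [jacobiTheta₂]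
  simp only [hterm]
  rw [← jacobi_triple_product (exp_ne_zero _) (norm_nome_lt_one hτ) (exp_ne_zero _) hs, jTheta3]
  simp only [qpow_add_one, qpow_add_half, Complex.exp_neg]

lemma jTheta2_eq_jTheta3 (v τ : ℂ) : jTheta2 v τ = jTheta3 (v - 1 / 2) τ := by
  have e1 : cexp (2 * Real.pi * I * (v - 1 / 2)) = -cexp (2 * Real.pi * I * v) := by
    rw [show 2 * Real.pi * I * (v - 1 / 2) = 2 * Real.pi * I * v - Real.pi * I by ring,
      exp_sub_pi_mul_I]
  simp only [jTheta2, jTheta3, Complex.exp_neg, e1, inv_neg, neg_mul, ← sub_eq_add_neg]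

/-- Shifting `v` by half the quasi-period moves the factor `1 + e^{-2πiv}` into the last product;
together with `e^{πiv}` it is `2 cos(πv)`. -/
lemma jTheta1_eq_jTheta3 (v : ℂ) {τ : ℂ} (hτ : 0 < τ.im) :
    jTheta1 v τ = qpow τ (1 / 8) * cexp (Real.pi * I * v) * jTheta3 (v + τ / 2) τ := by
  have h1 := norm_nome_lt_one hτ
  have h0 := exp_ne_zero (Real.pi * I * τ)
  have e1 : cexp (2 * Real.pi * I * (v + τ / 2))
      = cexp (2 * Real.pi * I * v) * cexp (Real.pi * I * τ) := by
    rw [← Complex.exp_add]; congr 1; ring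
  have ecos : 2 * Complex.cos (Real.pi * v)
      = cexp (Real.pi * I * v) * (1 + (cexp (2 * Real.pi * I * v))⁻¹) := by
    rw [Complex.two_cos, mul_add, mul_one, ← Complex.exp_neg, ← Complex.exp_add]
    congr 2 <;> ring
  have hx := exp_ne_zero (2 * Real.pi * I * v)
  simp only [jTheta1, jTheta3, qpow_add_one, qpow_add_half, Complex.exp_neg, e1]
  generalize cexp (Real.pi * I * τ) = h at *
  generalize cexp (2 * Real.pi * I * v) = x at *
  have s1 : ∀ j : ℕ, x * h * h ^ (2 * j + 1) = x * h ^ (2 * j + 2) := fun j => by ring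
  have s2 : ∀ j : ℕ, (x * h)⁻¹ * h ^ (2 * j + 1) = x⁻¹ * h ^ (2 * j + 0) := fun j => by
    field_simp; ring
  simp only [s1, s2]
  have m0 := multipliable_one_sub_pow h1
  have m1 := multipliable_one_add_mul_pow h1 x 2
  have m2 := multipliable_one_add_mul_pow h1 x⁻¹ 2
  have m3 := multipliable_one_add_mul_pow h1 x⁻¹ 0
  have hsplit : ∏' j : ℕ, (1 + x⁻¹ * h ^ (2 * j + 0))
      = (1 + x⁻¹) * ∏' j : ℕ, (1 + x⁻¹ * h ^ (2 * j + 2)) := by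
    rw [tprod_eq_zero_mul' (by simpa [mul_add] using m2)]
    simp [mul_add]
  rw [(m0.mul m1).tprod_mul m2, (m0.mul m1).tprod_mul m3, hsplit]
  linear_combination qpow τ (1 / 8) * (∏' j : ℕ, (1 - h ^ (2 * j + 2)) * (1 + x * h ^ (2 * j + 2)))
    * (∏' j : ℕ, (1 + x⁻¹ * h ^ (2 * j + 2))) * ecos

theorem theta1_S_transformation (τ : ℂ) (hτ : 0 < τ.im) (t : ℂ) :
    jTheta1 (t / τ) (-1 / τ) =
      (τ / Complex.I) ^ ((1 : ℂ) / 2) *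
        Complex.exp ((Real.pi : ℂ) * Complex.I * t ^ 2 / τ) * jTheta2 t τ := by
  have hτ0 : τ ≠ 0 := by rintro rfl; simp at hτ
  have hτ' : 0 < (-1 / τ).im := by
    rw [neg_div, neg_im, one_div, inv_im, neg_div, neg_neg]
    exact div_pos hτ (normSq_pos.mpr hτ0)
  rw [jTheta1_eq_jTheta3 _ hτ', jTheta2_eq_jTheta3, jTheta3_eq_jacobiTheta₂ _ hτ',
    jTheta3_eq_jacobiTheta₂ _ hτ, jacobiTheta₂_functional_equation (t - 1 / 2) τ]
  have earg : t / τ + -1 / τ / 2 = (t - 1 / 2) / τ := by ring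
  have eroot : τ / I = -I * τ := by rw [div_I]; ring
  have hroot : (-I * τ) ^ (1 / 2 : ℂ) ≠ 0 := by
    simp [Complex.cpow_eq_zero_iff, hτ0]
  have eexp : qpow (-1 / τ) (1 / 8) * cexp (Real.pi * I * (t / τ))
      = cexp (Real.pi * I * t ^ 2 / τ) * cexp (-Real.pi * I * (t - 1 / 2) ^ 2 / τ) := by
    rw [qpow, ← Complex.exp_add, ← Complex.exp_add]
    congr 1; field_simp; ring
  rw [earg, eroot, eexp]
  field_simp
end

section
/- For every τ in the upper half-plane H, the derivative at v = 0 of the Jacobi theta function θ satisfies the modular S-transformation law θ'(0, −1/τ) = (τ/i)^{3/2} · θ'(0,τ), where (τ/i)^{3/2} denotes the principal branch (well defined since Re(τ/i) > 0 for τ ∈ H). -/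
/-- A product with a factor vanishing at `a` only needs its other factor to be continuous there in
order to be differentiable. -/
lemma hasDerivAt_mul_of_eq_zero {f g : ℂ → ℂ} {f' a : ℂ} (hf : HasDerivAt f f' a) (h0 : f a = 0)
    (hg : ContinuousAt g a) : HasDerivAt (fun v => f v * g v) (f' * g a) a := by
  rw [hasDerivAt_iff_tendsto_slope] at hf ⊢
  refine (hf.mul (hg.tendsto.mono_left nhdsWithin_le_nhds)).congr fun v => ?_
  simp only [slope_def_field, h0]
  ring

lemma summable_norm_mul_pow_succ {q : ℂ} (hq : ‖q‖ < 1) (x : ℂ) :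
    Summable fun j : ℕ => ‖-(x * q ^ (j + 1))‖ := by
  simpa only [norm_neg, norm_mul, norm_pow] using ((summable_nat_add_iff 1).mpr
    (summable_geometric_of_lt_one (norm_nonneg q) hq)).mul_left ‖x‖

lemma multipliable_one_sub_mul_pow_succ {q : ℂ} (hq : ‖q‖ < 1) (x : ℂ) :
    Multipliable fun j : ℕ => 1 - x * q ^ (j + 1) := by
  simpa only [sub_eq_add_neg] using
    multipliable_one_add_of_summable (summable_norm_mul_pow_succ hq x)

lemma continuousAt_tprod_one_sub_mul_pow_succ {q : ℂ} (hq : ‖q‖ < 1) {c : ℂ → ℂ} {a : ℂ}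
    (hc : ContinuousAt c a) : ContinuousAt (fun v => ∏' j : ℕ, (1 - c v * q ^ (j + 1))) a := by
  simp only [sub_eq_add_neg]
  refine tendsto_tprod_one_add_of_dominated_convergence
    (bound := fun j : ℕ => (‖c a‖ + 1) * ‖q‖ ^ (j + 1)) ?_ ?_ ?_
  · exact ((summable_nat_add_iff 1).mpr
      (summable_geometric_of_lt_one (norm_nonneg q) hq)).mul_left _
  · exact fun j => (hc.mul continuousAt_const).neg.tendsto
  · filter_upwards [hc.norm.eventually_lt continuousAt_const (lt_add_one ‖c a‖)] with v hv j
    rw [norm_neg, norm_mul, norm_pow]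
    gcongr

lemma qpow_natCast_add_one (τ : ℂ) (j : ℕ) : qpow τ ((j : ℂ) + 1) = qpow τ 1 ^ (j + 1) := by
  rw [qpow, qpow, ← Complex.exp_nat_mul]
  push_cast
  ring_nf

lemma norm_qpow_one_lt_one {τ : ℂ} (hτ : 0 < τ.im) : ‖qpow τ 1‖ < 1 := by
  simpa [qpow] using UpperHalfPlane.norm_exp_two_pi_I_lt_one ⟨τ, hτ⟩

lemma eta_pow_three (τ : ℂ) :
    ModularForm.eta τ ^ 3 = qpow τ (1 / 8) * (∏' j : ℕ, (1 - qpow τ 1 ^ (j + 1))) ^ 3 := by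
  have h1 : Function.Periodic.qParam 24 τ ^ 3 = qpow τ (1 / 8) := by
    rw [Function.Periodic.qParam, qpow, ← Complex.exp_nat_mul]
    congr 1
    push_cast
    ring
  have h2 (j : ℕ) : ModularForm.eta_q j τ = qpow τ 1 ^ (j + 1) := by
    rw [ModularForm.eta_q_eq_pow, qpow, mul_one]
  simp only [ModularForm.eta, mul_pow, h1, h2]

lemma jThetaDeriv_eq_eta {τ : ℂ} (hτ : 0 < τ.im) :
    jThetaDeriv τ = 2 * (Real.pi : ℂ) * ModularForm.eta τ ^ 3 := by
  have hq := norm_qpow_one_lt_one hτ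
  set P : ℂ → ℂ := fun x => ∏' j : ℕ, (1 - x * qpow τ 1 ^ (j + 1)) with hP
  have hsplit : (fun v => jTheta v τ) = fun v =>
      2 * qpow τ (1 / 8) * Complex.sin ((Real.pi : ℂ) * v) *
        (P 1 * P (Complex.exp (2 * (Real.pi : ℂ) * Complex.I * v)) *
          P (Complex.exp (-(2 * (Real.pi : ℂ) * Complex.I * v)))) := by
    funext v
    have hm := multipliable_one_sub_mul_pow_succ hq
    simp only [jTheta, qpow_natCast_add_one, hP]
    rw [← (hm _).tprod_mul (hm _), ← ((hm _).mul (hm _)).tprod_mul (hm _)]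
    simp only [one_mul]
  have hcont : ContinuousAt (fun v => P 1 * P (Complex.exp (2 * (Real.pi : ℂ) * Complex.I * v)) *
      P (Complex.exp (-(2 * (Real.pi : ℂ) * Complex.I * v)))) 0 :=
    (continuousAt_const.mul (continuousAt_tprod_one_sub_mul_pow_succ hq (by fun_prop))).mul
      (continuousAt_tprod_one_sub_mul_pow_succ hq (by fun_prop))
  have hsin : HasDerivAt (fun v => 2 * qpow τ (1 / 8) * Complex.sin ((Real.pi : ℂ) * v))
      (2 * qpow τ (1 / 8) * Real.pi) 0 := by
    simpa using (((hasDerivAt_id (0 : ℂ)).const_mul (Real.pi : ℂ)).csin).const_mul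
      (2 * qpow τ (1 / 8))
  rw [jThetaDeriv, hsplit, (hasDerivAt_mul_of_eq_zero hsin (by simp) hcont).deriv, eta_pow_three]
  simp only [mul_zero, neg_zero, Complex.exp_zero, hP, one_mul]
  ring

/-- The principal branches are compatible: `arg τ - π/2` stays in `(-π, π]` for `τ` in the upper
half-plane. -/
lemma sqrt_ratio_pow_three {τ : ℂ} (hτ : 0 < τ.im) :
    ((Complex.sqrt Complex.I)⁻¹ * Complex.sqrt τ) ^ 3 = (τ / Complex.I) ^ ((3 : ℂ) / 2) := by
  have h0 : τ ≠ 0 := by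
    rintro rfl
    simp at hτ
  have hlog : Complex.log (τ / Complex.I) = Complex.log τ - Complex.log Complex.I := by
    have harg : 0 ≤ τ.arg := Complex.arg_nonneg_iff.mpr hτ.le
    have hpi := Complex.arg_le_pi τ
    have := Real.pi_pos
    rw [Complex.div_I, ← mul_neg, Complex.log_mul h0 (by simp)
      (by rw [Complex.arg_neg_I]; constructor <;> linarith), Complex.log_neg_I, Complex.log_I]
    ring
  rw [Complex.cpow_def_of_ne_zero (div_ne_zero h0 Complex.I_ne_zero), hlog,
    Complex.sqrt, Complex.sqrt, Complex.cpow_def_of_ne_zero Complex.I_ne_zero,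
    Complex.cpow_def_of_ne_zero h0, ← Complex.exp_neg,
    ← Complex.exp_add, ← Complex.exp_nat_mul]
  congr 1
  push_cast
  ring

theorem thetaDeriv_S_transformation (τ : ℂ) (hτ : 0 < τ.im) :
    jThetaDeriv (-1 / τ) = (τ / Complex.I) ^ ((3 : ℂ) / 2) * jThetaDeriv τ := by
  have hS : 0 < (-1 / τ).im := by
    simpa [neg_div] using UpperHalfPlane.im_inv_neg_coe_pos ⟨τ, hτ⟩
  have heta : ModularForm.eta (-1 / τ) =
      (Complex.sqrt Complex.I)⁻¹ * (Complex.sqrt τ * ModularForm.eta τ) :=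
    ModularForm.eta_comp_eq_csqrt_I_inv hτ
  rw [jThetaDeriv_eq_eta hS, jThetaDeriv_eq_eta hτ, heta, ← sqrt_ratio_pow_three hτ]
  ring
end

section
/- For every τ in the upper half-plane H and every w ∈ ℂ, the following identity holds: θ'(0, −1/τ) · θ(τw, τ) = τ · e^{−πiτw²} · θ'(0,τ) · θ(w, −1/τ). (Equivalently, where the denominators are nonzero, θ'(0,−1/τ)/θ(w,−1/τ) = e^{−πiτw²} · τ · θ'(0,τ)/θ(τw,τ).) -/
/-! ### Quasi-periodic entire functions -/

/-- The divisibility step: if `F` and `G` are entire and `F` vanishes at every zero of `G`, all of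
which are simple, then the quotient `F / G` extends to an entire function. -/
theorem exists_entire_quotient {F G : ℂ → ℂ} (hF : Differentiable ℂ F) (hG : Differentiable ℂ G)
    (hz : ∀ z, G z = 0 → F z = 0 ∧ deriv G z ≠ 0) :
    ∃ h : ℂ → ℂ, Differentiable ℂ h ∧ ∀ z, F z = h z * G z := by
  classical
  refine ⟨fun z => if G z = 0 then deriv F z / deriv G z else F z / G z, fun z => ?_, fun z => ?_⟩
  · by_cases h0 : G z = 0
    · obtain ⟨hFz, hGz⟩ := hz z h0
      -- near a zero `z`, the quotient is the ratio of the difference quotients of `F` and `G`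
      have hd : ∀ {f : ℂ → ℂ}, Differentiable ℂ f → Differentiable ℂ (dslope f z) := fun hf =>
        differentiableOn_univ.1
          ((Complex.differentiableOn_dslope Filter.univ_mem).2 hf.differentiableOn)
      have hne : dslope G z z ≠ 0 := by rwa [dslope_same]
      have hda : DifferentiableAt ℂ (fun y => dslope F z y / dslope G z y) z :=
        ((hd hF) z).div ((hd hG) z) hne
      refine hda.congr_of_eventuallyEq ?_
      filter_upwards [((hd hG) z).continuousAt.eventually_ne hne] with y hy
      by_cases hyz : y = z
      · subst hyz
        simp [h0]
      · have e1 : F y = (y - z) * dslope F z y := by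
          have := sub_smul_dslope F z y
          simp only [smul_eq_mul] at this
          rw [this, hFz, sub_zero]
        have e2 : G y = (y - z) * dslope G z y := by
          have := sub_smul_dslope G z y
          simp only [smul_eq_mul] at this
          rw [this, h0, sub_zero]
        have hs : y - z ≠ 0 := sub_ne_zero.2 hyz
        have hGy : G y ≠ 0 := by rw [e2]; exact mul_ne_zero hs hy
        simp only [hGy, if_false]
        rw [e1, e2, mul_div_mul_left _ _ hs]
    · have hda : DifferentiableAt ℂ (fun y => F y / G y) z := (hF z).div (hG z) h0
      refine hda.congr_of_eventuallyEq ?_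
      filter_upwards [(hG z).continuousAt.eventually_ne h0] with y hy
      simp [hy]
  · by_cases h0 : G z = 0
    · simp [h0, (hz z h0).1]
    · simp [h0]

/-- If `F` and `G` have the same multiplier under translation by `p` and all zeros of `G` are
simple, then the entire quotient `h = F / G` has period `p`. -/
theorem quotient_periodic {F G h m : ℂ → ℂ} {p : ℂ} (hG : Differentiable ℂ G)
    (hh : Differentiable ℂ h) (hz : ∀ z, G z = 0 → deriv G z ≠ 0)
    (hq : ∀ z, F z = h z * G z) (hm : ∀ z, m z ≠ 0)
    (hFp : ∀ z, F (z + p) = m z * F z) (hGp : ∀ z, G (z + p) = m z * G z) :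
    Function.Periodic h p := by
  have key : ∀ z, (h (z + p) - h z) * G z = 0 := fun z => by
    have h1 := hFp z
    rw [hq, hq z, hGp] at h1
    have h2 : m z * ((h (z + p) - h z) * G z) = 0 := by linear_combination h1
    exact (mul_eq_zero.1 h2).resolve_left (hm z)
  intro z
  by_cases h0 : G z = 0
  · -- at a zero of `G`, differentiate the identity `key`
    have hd1 : HasDerivAt (fun z => h (z + p) - h z) (deriv h (z + p) - deriv h z) z :=
      ((hh (z + p)).hasDerivAt.comp_add_const z p).sub (hh z).hasDerivAt
    have hd2 := hd1.mul (hG z).hasDerivAt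
    have hd3 : HasDerivAt ((fun z => h (z + p) - h z) * G) 0 z := by
      have : ((fun z => h (z + p) - h z) * G) = fun _ => 0 := funext key
      rw [this]
      exact hasDerivAt_const z 0
    have h3 := hd2.unique hd3
    rw [h0, mul_zero, zero_add] at h3
    exact sub_eq_zero.1 ((mul_eq_zero.1 h3).resolve_right (hz z h0))
  · exact sub_eq_zero.1 ((mul_eq_zero.1 (key z)).resolve_right h0)

/-- Entire functions with the two periods `1` and `t`, `Im t > 0`, are constant. -/
theorem doublyPeriodic_const {h : ℂ → ℂ} {t : ℂ} (ht : 0 < t.im) (hh : Differentiable ℂ h)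
    (h1 : Function.Periodic h 1) (h2 : Function.Periodic h t) (z : ℂ) : h z = h 0 := by
  refine hh.apply_eq_apply_of_bounded ?_ z 0
  have hK : IsCompact ((fun x : ℝ × ℝ => h (x.1 + x.2 * t)) ''
      (Set.Icc (0 : ℝ) 1 ×ˢ Set.Icc (0 : ℝ) 1)) :=
    (isCompact_Icc.prod isCompact_Icc).image (hh.continuous.comp (by fun_prop))
  refine hK.isBounded.subset ?_
  rintro _ ⟨z, rfl⟩
  -- real coordinates of `z` with respect to the basis `1, t`
  set b : ℝ := z.im / t.im with hb
  set a : ℝ := z.re - b * t.re with ha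
  have hz : z = a + b * t := by
    apply Complex.ext
    · simp [ha]
    · simp [hb, ht.ne']
  refine ⟨(Int.fract a, Int.fract b), ⟨⟨Int.fract_nonneg _, (Int.fract_lt_one _).le⟩,
    ⟨Int.fract_nonneg _, (Int.fract_lt_one _).le⟩⟩, ?_⟩
  have e : z = ((Int.fract a : ℝ) + (Int.fract b : ℝ) * t) + (⌊a⌋ : ℂ) * 1 + (⌊b⌋ : ℂ) * t := by
    have ea : (a : ℂ) = (⌊a⌋ : ℂ) + (Int.fract a : ℝ) := by
      exact_mod_cast (Int.floor_add_fract a).symm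
    have eb : (b : ℂ) = (⌊b⌋ : ℂ) + (Int.fract b : ℝ) := by
      exact_mod_cast (Int.floor_add_fract b).symm
    rw [hz, ea, eb]
    ring
  conv_rhs => rw [e, h2.int_mul ⌊b⌋, h1.int_mul ⌊a⌋]

/-- Translation by a quasi-period preserves common zeros of `F` and `G` that are simple zeros
of `G`. -/
theorem simpleZero_periodic {F G m : ℂ → ℂ} {p : ℂ} (hG : Differentiable ℂ G)
    (hmd : Differentiable ℂ m) (hm : ∀ z, m z ≠ 0)
    (hFp : ∀ z, F (z + p) = m z * F z) (hGp : ∀ z, G (z + p) = m z * G z) :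
    Function.Periodic (fun z => F z = 0 ∧ G z = 0 ∧ deriv G z ≠ 0) p := by
  intro z
  have hd : deriv G (z + p) = deriv m z * G z + m z * deriv G z := by
    rw [← deriv_comp_add_const, funext hGp]
    exact ((hmd z).hasDerivAt.mul (hG z).hasDerivAt).deriv
  apply propext
  simp only [hFp, hGp, mul_eq_zero, hm z, false_or, hd]
  refine and_congr_right fun _ => and_congr_right fun h0 => ?_
  simp [h0, hm z]

/-- Two entire functions with the same multipliers for the lattice `ℤ + ℤ t`, both vanishing at `0`,
are proportional, as soon as one of them vanishes only at lattice points and its zero at `0` is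
simple. -/
theorem proportional_of_quasiPeriodic {F G m₁ m₂ : ℂ → ℂ} {t : ℂ} (ht : 0 < t.im)
    (hF : Differentiable ℂ F) (hG : Differentiable ℂ G)
    (hd₁ : Differentiable ℂ m₁) (hd₂ : Differentiable ℂ m₂)
    (hm₁ : ∀ z, m₁ z ≠ 0) (hm₂ : ∀ z, m₂ z ≠ 0)
    (hF₁ : ∀ z, F (z + 1) = m₁ z * F z) (hG₁ : ∀ z, G (z + 1) = m₁ z * G z)
    (hF₂ : ∀ z, F (z + t) = m₂ z * F z) (hG₂ : ∀ z, G (z + t) = m₂ z * G z)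
    (hz : ∀ z, G z = 0 → ∃ a b : ℤ, z = a + b * t)
    (hF0 : F 0 = 0) (hG0 : G 0 = 0) (hG' : deriv G 0 ≠ 0) :
    ∃ c : ℂ, ∀ z, F z = c * G z := by
  have hS : ∀ z, G z = 0 → F z = 0 ∧ G z = 0 ∧ deriv G z ≠ 0 := by
    intro z h0
    obtain ⟨a, b, rfl⟩ := hz z h0
    have p1 := (simpleZero_periodic hG hd₁ hm₁ hF₁ hG₁).int_mul a
    have p2 := (simpleZero_periodic hG hd₂ hm₂ hF₂ hG₂).int_mul b
    have e1 := p1 0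
    have e2 := p2 (0 + a * 1)
    rw [e1] at e2
    rw [zero_add, mul_one] at e2
    exact e2.mpr ⟨hF0, hG0, hG'⟩
  obtain ⟨h, hh, hq⟩ := exists_entire_quotient hF hG fun z h0 => ⟨(hS z h0).1, (hS z h0).2.2⟩
  have hs : ∀ z, G z = 0 → deriv G z ≠ 0 := fun z h0 => (hS z h0).2.2
  refine ⟨h 0, fun z => ?_⟩
  rw [hq z, doublyPeriodic_const ht hh (quotient_periodic hG hh hs hq hm₁ hF₁ hG₁)
    (quotient_periodic hG hh hs hq hm₂ hF₂ hG₂) z]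

/-! ### The product `∏ (1 - y q^j)` -/

/-- The infinite `q`-Pochhammer symbol `(y; q)_∞ = ∏_{j ≥ 0} (1 - y q^j)`. -/
noncomputable def qProd (q y : ℂ) : ℂ := ∏' j : ℕ, (1 - y * q ^ j)

theorem summable_norm_mul_pow {q : ℂ} (hq : ‖q‖ < 1) (y : ℂ) :
    Summable fun j : ℕ => ‖-(y * q ^ j)‖ := by
  simpa using (summable_geometric_of_lt_one (norm_nonneg q) hq).mul_left ‖y‖

theorem multipliable_qProd {q : ℂ} (hq : ‖q‖ < 1) (y : ℂ) :
    Multipliable fun j : ℕ => 1 - y * q ^ j := by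
  simpa [sub_eq_add_neg] using multipliable_one_add_of_summable (summable_norm_mul_pow hq y)

theorem qProd_eq_mul {q : ℂ} (hq : ‖q‖ < 1) (y : ℂ) :
    qProd q y = (1 - y) * qProd q (y * q) := by
  have h : ∀ j : ℕ, 1 - y * q ^ (j + 1) = 1 - y * q * q ^ j := fun j => by ring
  unfold qProd
  rw [tprod_eq_zero_mul']
  · simp only [h, pow_zero, mul_one]
  · simpa only [h] using multipliable_qProd hq (y * q)

theorem exists_of_qProd_eq_zero {q y : ℂ} (hq : ‖q‖ < 1) (h : qProd q y = 0) :
    ∃ j : ℕ, y * q ^ j = 1 := by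
  by_contra! hne
  refine tprod_one_add_ne_zero_of_summable (f := fun j : ℕ => -(y * q ^ j)) (fun j => ?_)
    (summable_norm_mul_pow hq y) (by simpa [qProd, sub_eq_add_neg] using h)
  rw [← sub_eq_add_neg]
  exact sub_ne_zero.2 (hne j).symm

theorem qProd_self_ne_zero {q : ℂ} (hq : ‖q‖ < 1) : qProd q q ≠ 0 := by
  intro h
  obtain ⟨j, hj⟩ := exists_of_qProd_eq_zero hq h
  have h1 : ‖q‖ ^ (j + 1) = 1 := by
    rw [← norm_pow, pow_succ', hj, norm_one]
  exact (pow_lt_one₀ (norm_nonneg q) hq j.succ_ne_zero).ne h1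

theorem differentiable_qProd {q : ℂ} (hq : ‖q‖ < 1) : Differentiable ℂ (qProd q) := by
  intro y
  have hu := (summable_geometric_of_lt_one (norm_nonneg q) hq).mul_left (‖y‖ + 1)
  have hO : IsOpen (Metric.ball (0 : ℂ) (‖y‖ + 1)) := Metric.isOpen_ball
  have hl := Summable.hasProdLocallyUniformlyOn_nat_one_add (f := fun j x => -(x * q ^ j)) hO hu
    (.of_forall fun n x hx => by
      rw [norm_neg, norm_mul, norm_pow]
      have : ‖x‖ ≤ ‖y‖ + 1 := by simpa using (mem_ball_zero_iff.1 hx).le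
      gcongr) (fun n => by fun_prop)
  have hd := hl.differentiableOn
    (.of_forall fun _ ↦ by simpa [Finset.prod_fn] using
      DifferentiableOn.finsetProd (fun _ _ ↦ by fun_prop)) hO
  have he : qProd q = fun x => ∏' j : ℕ, (1 + -(x * q ^ j)) := by
    funext x
    simp [qProd, sub_eq_add_neg]
  rw [he]
  exact hd.differentiableAt (hO.mem_nhds (by simp))

/-! ### The theta function -/

/-- The nome `q = e^{2πiτ}`. -/
noncomputable def nome (τ : ℂ) : ℂ := Complex.exp (2 * (Real.pi : ℂ) * Complex.I * τ)

theorem norm_nome_lt_one_s15 {τ : ℂ} (hτ : 0 < τ.im) : ‖nome τ‖ < 1 := by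
  rw [nome, Complex.norm_exp, Real.exp_lt_one_iff]
  have : (2 * (Real.pi : ℂ) * Complex.I * τ).re = -(2 * Real.pi * τ.im) := by simp
  rw [this]
  have := Real.pi_pos
  rw [neg_lt_zero]
  positivity

theorem nome_ne_zero (τ : ℂ) : nome τ ≠ 0 := Complex.exp_ne_zero _

theorem nome_neg (τ : ℂ) : nome (-τ) = (nome τ)⁻¹ := by
  rw [nome, nome, ← Complex.exp_neg]
  congr 1
  ring

theorem nome_add (σ τ : ℂ) : nome (σ + τ) = nome σ * nome τ := by
  rw [nome, nome, nome, ← Complex.exp_add]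
  congr 1
  ring

theorem nome_mul_nat (τ : ℂ) (j : ℕ) : nome (j * τ) = nome τ ^ j := by
  rw [nome, nome, ← Complex.exp_nat_mul]
  congr 1
  ring

theorem exists_int_of_nome_eq_one {v : ℂ} (h : nome v = 1) : ∃ n : ℤ, v = n := by
  obtain ⟨n, hn⟩ := Complex.exp_eq_one_iff.1 h
  refine ⟨n, ?_⟩
  have hne : 2 * (Real.pi : ℂ) * Complex.I ≠ 0 := Complex.two_pi_I_ne_zero
  exact mul_left_cancel₀ hne (by rw [hn]; ring)

/-- The factor of the theta function that does not depend on `v`. -/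
noncomputable def thetaConst (τ : ℂ) : ℂ := qpow τ (1 / 8) * Complex.I * qProd (nome τ) (nome τ)

theorem thetaConst_ne_zero {τ : ℂ} (hτ : 0 < τ.im) : thetaConst τ ≠ 0 :=
  mul_ne_zero (mul_ne_zero (Complex.exp_ne_zero _) Complex.I_ne_zero)
    (qProd_self_ne_zero (norm_nome_lt_one_s15 hτ))

/-- With `x = e^{2πiv}`, the factor `2 sin(πv) = i e^{-πiv} (1 - x)` supplies the missing zeroth
factor of `∏_{j ≥ 1} (1 - x q^j)`. -/
theorem jTheta_eq {τ : ℂ} (hτ : 0 < τ.im) (v : ℂ) :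
    jTheta v τ = thetaConst τ * Complex.exp (-((Real.pi : ℂ) * Complex.I * v)) *
      qProd (nome τ) (nome v) * qProd (nome τ) (nome (-v) * nome τ) := by
  have hq := norm_nome_lt_one_s15 hτ
  have hp : ∀ j : ℕ, qpow τ ((j : ℂ) + 1) = nome τ * nome τ ^ j := fun j => by
    rw [← pow_succ', nome, ← Complex.exp_nat_mul, qpow]
    congr 1
    push_cast
    ring
  have hv : Complex.exp (-(2 * (Real.pi : ℂ) * Complex.I * v)) = nome (-v) := by
    rw [nome]; congr 1; ring
  have hs : 2 * Complex.sin ((Real.pi : ℂ) * v) =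
      Complex.I * Complex.exp (-((Real.pi : ℂ) * Complex.I * v)) * (1 - nome v) := by
    have e1 : nome v = Complex.exp ((Real.pi : ℂ) * Complex.I * v) *
        Complex.exp ((Real.pi : ℂ) * Complex.I * v) := by
      rw [nome, ← Complex.exp_add]; congr 1; ring
    have e2 : Complex.exp (-((Real.pi : ℂ) * Complex.I * v)) *
        Complex.exp ((Real.pi : ℂ) * Complex.I * v) = 1 := by
      rw [← Complex.exp_add]; simp
    rw [e1, Complex.sin]
    have e3 : -((Real.pi : ℂ) * v) * Complex.I = -((Real.pi : ℂ) * Complex.I * v) := by ring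
    have e4 : ((Real.pi : ℂ) * v) * Complex.I = (Real.pi : ℂ) * Complex.I * v := by ring
    rw [e3, e4]
    linear_combination Complex.I * Complex.exp ((Real.pi : ℂ) * Complex.I * v) * e2
  have m1 := multipliable_qProd hq (nome τ)
  have m2 := multipliable_qProd hq (nome v * nome τ)
  have m3 := multipliable_qProd hq (nome (-v) * nome τ)
  have ht : (∏' j : ℕ, ((1 - qpow τ ((j : ℂ) + 1)) *
      (1 - Complex.exp (2 * (Real.pi : ℂ) * Complex.I * v) * qpow τ ((j : ℂ) + 1)) *
      (1 - Complex.exp (-(2 * (Real.pi : ℂ) * Complex.I * v)) * qpow τ ((j : ℂ) + 1)))) =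
      qProd (nome τ) (nome τ) * qProd (nome τ) (nome v * nome τ) *
        qProd (nome τ) (nome (-v) * nome τ) := by
    rw [qProd, qProd, qProd, ← m1.tprod_mul m2, ← (m1.mul m2).tprod_mul m3]
    refine tprod_congr fun j => ?_
    rw [hp, hv, ← nome, mul_assoc, mul_assoc]
    ring
  rw [jTheta, ht, qProd_eq_mul hq (nome v), thetaConst]
  linear_combination qpow τ (1 / 8) * qProd (nome τ) (nome τ) *
    qProd (nome τ) (nome v * nome τ) * qProd (nome τ) (nome (-v) * nome τ) * hs

theorem differentiable_jTheta {τ : ℂ} (hτ : 0 < τ.im) : Differentiable ℂ fun v => jTheta v τ := by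
  have hA := differentiable_qProd (norm_nome_lt_one_s15 hτ)
  have hn : Differentiable ℂ nome := by unfold nome; fun_prop
  rw [funext (jTheta_eq hτ)]
  exact (((differentiable_const _).mul (by fun_prop)).mul (hA.comp hn)).mul
    (hA.comp ((hn.comp differentiable_neg).mul_const _))

theorem jTheta_zero (τ : ℂ) : jTheta 0 τ = 0 := by simp [jTheta]

theorem jTheta_add_one (v τ : ℂ) : jTheta (v + 1) τ = -jTheta v τ := by
  have hn : ∀ v : ℂ, Complex.exp (2 * (Real.pi : ℂ) * Complex.I * (v + 1)) =
      Complex.exp (2 * (Real.pi : ℂ) * Complex.I * v) := fun v => by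
    rw [mul_add, mul_one, Complex.exp_add, Complex.exp_two_pi_mul_I, mul_one]
  simp only [jTheta, Complex.exp_neg, hn]
  rw [mul_add, mul_one, Complex.sin_add_pi]
  ring

/-- `θ(v + τ, τ) = -e^{-2πiv - πiτ} θ(v, τ)`: replacing `x` by `x q` moves one factor from
`∏ (1 - x q^j)` to `∏ (1 - x⁻¹ q^(j+1))`. -/
theorem jTheta_add_tau {τ : ℂ} (hτ : 0 < τ.im) (v : ℂ) :
    jTheta (v + τ) τ = -Complex.exp (-((Real.pi : ℂ) * Complex.I * (2 * v + τ))) * jTheta v τ := by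
  have hq := norm_nome_lt_one_s15 hτ
  have e1 : nome (-(v + τ)) * nome τ = nome (-v) := by
    rw [← nome_add]; congr 1; ring
  have e2 : Complex.exp (-((Real.pi : ℂ) * Complex.I * (v + τ))) = nome v *
      (Complex.exp (-((Real.pi : ℂ) * Complex.I * (2 * v + τ))) *
        Complex.exp (-((Real.pi : ℂ) * Complex.I * v))) := by
    rw [nome, ← Complex.exp_add, ← Complex.exp_add]; congr 1; ring
  have e3 : nome v * nome (-v) = 1 := by
    rw [nome_neg, mul_inv_cancel₀ (nome_ne_zero v)]
  rw [jTheta_eq hτ, jTheta_eq hτ, e1, e2, nome_add, qProd_eq_mul hq (nome (-v)),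
    qProd_eq_mul hq (nome v)]
  linear_combination -thetaConst τ * Complex.exp (-((Real.pi : ℂ) * Complex.I * (2 * v + τ))) *
        Complex.exp (-((Real.pi : ℂ) * Complex.I * v)) * qProd (nome τ) (nome v * nome τ) *
        qProd (nome τ) (nome (-v) * nome τ) * e3

theorem exists_of_jTheta_eq_zero {τ : ℂ} (hτ : 0 < τ.im) {v : ℂ} (h : jTheta v τ = 0) :
    ∃ a b : ℤ, v = a + b * τ := by
  have hq := norm_nome_lt_one_s15 hτ
  rw [jTheta_eq hτ] at h
  rcases mul_eq_zero.1 h with h | h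
  · have h := (mul_eq_zero.1 h).resolve_left
      (mul_ne_zero (thetaConst_ne_zero hτ) (Complex.exp_ne_zero _))
    obtain ⟨j, hj⟩ := exists_of_qProd_eq_zero hq h
    rw [← nome_mul_nat, ← nome_add] at hj
    obtain ⟨n, hn⟩ := exists_int_of_nome_eq_one hj
    refine ⟨n, -j, ?_⟩
    push_cast
    linear_combination hn
  · obtain ⟨j, hj⟩ := exists_of_qProd_eq_zero hq h
    rw [← nome_mul_nat, ← nome_add, ← nome_add] at hj
    obtain ⟨n, hn⟩ := exists_int_of_nome_eq_one hj
    refine ⟨-n, j + 1, ?_⟩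
    push_cast
    linear_combination -hn

theorem jThetaDeriv_ne_zero {τ : ℂ} (hτ : 0 < τ.im) : jThetaDeriv τ ≠ 0 := by
  have hq := norm_nome_lt_one_s15 hτ
  have hA := differentiable_qProd hq
  have hn : Differentiable ℂ nome := by unfold nome; fun_prop
  -- `θ(v) = (1 - e^{2πiv}) u(v)` with `u(0) ≠ 0`
  set u : ℂ → ℂ := fun v => thetaConst τ * Complex.exp (-((Real.pi : ℂ) * Complex.I * v)) *
      qProd (nome τ) (nome v * nome τ) * qProd (nome τ) (nome (-v) * nome τ) with hu
  have hud : Differentiable ℂ u :=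
    (((differentiable_const _).mul (by fun_prop)).mul (hA.comp (hn.mul_const _))).mul
      (hA.comp ((hn.comp differentiable_neg).mul_const _))
  have hn0 : nome 0 = 1 := by simp [nome]
  have hu0 : u 0 ≠ 0 := by
    simp only [hu, neg_zero, hn0, one_mul]
    exact mul_ne_zero (mul_ne_zero (mul_ne_zero (thetaConst_ne_zero hτ) (Complex.exp_ne_zero _))
      (qProd_self_ne_zero hq)) (qProd_self_ne_zero hq)
  have he : (fun v => jTheta v τ) = (fun v => 1 - nome v) * u := by
    funext v
    rw [jTheta_eq hτ, qProd_eq_mul hq (nome v)]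
    simp only [hu, Pi.mul_apply]
    ring
  have hnd : HasDerivAt nome (2 * (Real.pi : ℂ) * Complex.I) 0 := by
    have := ((hasDerivAt_id (0 : ℂ)).const_mul (2 * (Real.pi : ℂ) * Complex.I)).cexp
    simpa [nome] using! this
  have hd := (hnd.const_sub 1).mul (hud 0).hasDerivAt
  rw [jThetaDeriv, he, hd.deriv, hn0, sub_self, zero_mul, add_zero]
  exact mul_ne_zero (neg_ne_zero.2 Complex.two_pi_I_ne_zero) hu0

/-! ### The transformation `τ ↦ -1/τ` -/

theorem thetaDeriv_theta_S_identity (τ : ℂ) (hτ : 0 < τ.im) (w : ℂ) :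
    jThetaDeriv (-1 / τ) * jTheta (τ * w) τ =
      τ * Complex.exp (-((Real.pi : ℂ) * Complex.I * τ * w ^ 2)) * jThetaDeriv τ *
        jTheta w (-1 / τ) := by
  have hτ0 : τ ≠ 0 := by
    rintro rfl
    simp at hτ
  have ht : 0 < (-1 / τ).im := by
    rw [neg_div, one_div, Complex.neg_im, Complex.inv_im, neg_div, neg_neg]
    exact div_pos hτ (Complex.normSq_pos.2 hτ0)
  have hθ := differentiable_jTheta hτ
  set E : ℂ → ℂ := fun z => Complex.exp ((Real.pi : ℂ) * Complex.I * τ * z ^ 2) with hE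
  have hEd : Differentiable ℂ E := by simp only [hE]; fun_prop
  have hτz : Differentiable ℂ fun z : ℂ => τ * z := by fun_prop
  have hθτ : Differentiable ℂ fun z => jTheta (τ * z) τ := hθ.comp hτz
  have hneg : ∀ v, jTheta (v - 1) τ = -jTheta v τ := fun v => by
    have := jTheta_add_one (v - 1) τ
    rw [sub_add_cancel] at this
    rw [this, neg_neg]
  obtain ⟨c, hc⟩ := proportional_of_quasiPeriodic (t := -1 / τ)
    (F := fun z => E z * jTheta (τ * z) τ) (G := fun z => jTheta z (-1 / τ))
    (m₁ := fun _ => -1)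
    (m₂ := fun z => -Complex.exp (-((Real.pi : ℂ) * Complex.I * (2 * z + -1 / τ))))
    ht (hEd.mul hθτ) (differentiable_jTheta ht) (by fun_prop) (by fun_prop)
    (fun _ => by simp) (fun _ => neg_ne_zero.2 (Complex.exp_ne_zero _))
    (fun z => by
      have e : E (z + 1) * Complex.exp (-((Real.pi : ℂ) * Complex.I * (2 * (τ * z) + τ))) =
          E z := by
        simp only [hE]
        rw [← Complex.exp_add]
        congr 1
        ring
      rw [mul_add, mul_one, jTheta_add_tau hτ]
      linear_combination -jTheta (τ * z) τ * e)
    (fun z => by rw [jTheta_add_one]; ring)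
    (fun z => by
      have e : E (z + -1 / τ) =
          Complex.exp (-((Real.pi : ℂ) * Complex.I * (2 * z + -1 / τ))) * E z := by
        simp only [hE]
        rw [← Complex.exp_add]
        congr 1
        field_simp
        ring
      have e' : τ * (z + -1 / τ) = τ * z - 1 := by field_simp; ring
      rw [e', hneg, e]
      ring)
    (fun z => jTheta_add_tau ht z)
    (fun z h => exists_of_jTheta_eq_zero ht h)
    (by simp [jTheta_zero]) (jTheta_zero _) (jThetaDeriv_ne_zero ht)
  -- comparing derivatives at `0` determines the constant
  have hcd : τ * jThetaDeriv τ = c * jThetaDeriv (-1 / τ) := by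
    have h1 : HasDerivAt (fun z => jTheta (τ * z) τ) (jThetaDeriv τ * τ) 0 := by
      have h0 : HasDerivAt (fun v => jTheta v τ) (jThetaDeriv τ) (τ * 0) := by
        rw [mul_zero]
        exact (hθ 0).hasDerivAt
      have h2 : HasDerivAt (fun z : ℂ => τ * z) τ 0 := by
        simpa using (hasDerivAt_id (0 : ℂ)).const_mul τ
      exact h0.comp 0 h2
    have h2 := (hEd 0).hasDerivAt.mul h1
    have h3 : HasDerivAt (fun z => c * jTheta z (-1 / τ)) (c * jThetaDeriv (-1 / τ)) 0 :=
      ((differentiable_jTheta ht) 0).hasDerivAt.const_mul c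
    rw [← funext hc] at h3
    have h4 := h2.unique h3
    have hE0 : E 0 = 1 := by simp [hE]
    rw [mul_zero, jTheta_zero, mul_zero, hE0] at h4
    linear_combination h4
  have hinv : Complex.exp (-((Real.pi : ℂ) * Complex.I * τ * w ^ 2)) * E w = 1 := by
    simp only [hE]
    rw [← Complex.exp_add]
    simp
  have hw := hc w
  beta_reduce at hw
  linear_combination -jThetaDeriv (-1 / τ) * jTheta (τ * w) τ * hinv +
    Complex.exp (-((Real.pi : ℂ) * Complex.I * τ * w ^ 2)) * jThetaDeriv (-1 / τ) * hw -
    Complex.exp (-((Real.pi : ℂ) * Complex.I * τ * w ^ 2)) * jTheta w (-1 / τ) * hcd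
end
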